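/- Let 1, α₁, α₂ be linearly independent over ℤ, let m_ν, m_{ν+1} be two consecutive best approximations, put A_ν = M_ν^{1/τ}/120, and suppose ζ_ν ≥ A_ν · M_{ν+1}^{−τ/(τ−1)}. Then there exists an integer point (x₁⁰, x₂⁰) such that x₁⁰ > 0, x₂⁰ > 0, M_{ν+1} ≤ max{x₁⁰, x₂⁰} ≤ 2·M_{ν+1}^τ·A_ν^{−1}, and ‖α₁x₁⁰ + α₂x₂⁰‖ ≤ 24^τ·M_ν^{(1−τ)/τ}·(max{x₁⁰, x₂⁰})^{−τ}. -/

import Mathlib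

/-!
Write `p = m_ν`, `q = m_{ν+1}`, `X = M_{ν+1}` and `ζ = ζ_ν`. The box `|ζ(x)| < ζ`,
`max(|x₁|, |x₂|) < X` contains no integer point other than the origin. Rounding coefficients, any
integer point of the plane through `p` and `q` can be moved into this box, so `p, q` is part of a
basis of `ℤ³` and `det(p, q, ·)` takes every integer value on `ℤ³`. If `p` and `q` lie on the same
side of the plane `ζ(x) = 0`, the point `q - p` satisfies `|ζ(q - p)| < ζ`, hence
`M(q - p) ≥ X`; this forces the functional `(x₁, x₂) ↦ det(p, q, ·)` on the plane `ζ(x) = 0` to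
have `ℓ¹`-norm at least `X ζ`. Consequently every square of side `1 / (X ζ)` in that plane meets a
plane `det(p, q, ·) = k` with `k ∈ ℤ`, and rounding along `p` and `q` inside the latter produces
integer points `w` with `|ζ(w)| ≤ ζ` and `(w₁, w₂)` within `X + 1 / (2 X ζ)` of any prescribed
point of `ℝ²`. Near the diagonal this gives a positive point of height between `X` and
`3 X + 1 / (X ζ)`. When `3 X` dominates, the required bound comes from Dirichlet's estimate
`ζ X² ≤ 2`; otherwise it comes from the assumed lower bound for `ζ`, because the identity
`τ² = τ + 1` makes the powers of `X` cancel.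
-/

/-- distance from a real number to the nearest integer -/
noncomputable def nint (ξ : ℝ) : ℝ := |ξ - round ξ|

/-- `1, α₁, α₂` are linearly independent over `ℤ` -/
def ZLinIndep (α₁ α₂ : ℝ) : Prop :=
  ∀ a b c : ℤ, (a : ℝ) + b * α₁ + c * α₂ = 0 → a = 0 ∧ b = 0 ∧ c = 0

/-- the golden ratio τ = (1+√5)/2 -/
noncomputable def tau : ℝ := (1 + Real.sqrt 5) / 2

/-- the value of the linear form ζ(m) = m₀ + m₁α₁ + m₂α₂ at an integer vector m -/
noncomputable def zform (α₁ α₂ : ℝ) (m : ℤ × ℤ × ℤ) : ℝ :=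
  (m.1 : ℝ) + m.2.1 * α₁ + m.2.2 * α₂

/-- the height M(m) = max{|m₁|, |m₂|} of an integer vector m = (m₀, m₁, m₂) -/
def hgt (m : ℤ × ℤ × ℤ) : ℤ := max |m.2.1| |m.2.2|

/-- `m` is a best approximation (in the sense of the linear form) for `α₁, α₂`:
`|ζ(m)|` is minimal among all integer vectors `n` with `0 < max{|n₁|,|n₂|} ≤ max{|m₁|,|m₂|}`. -/
noncomputable def IsBestApprox (α₁ α₂ : ℝ) (m : ℤ × ℤ × ℤ) : Prop :=
  0 < hgt m ∧
  ∀ n : ℤ × ℤ × ℤ, 0 < hgt n → hgt n ≤ hgt m →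
    |zform α₁ α₂ m| ≤ |zform α₁ α₂ n|

/-- `m` and `m'` are two consecutive best approximations (`m = m_ν`, `m' = m_{ν+1}`):
both are best approximations, `M(m) < M(m')`, and no best approximation has height
strictly between them. -/
noncomputable def ConsecutiveBest (α₁ α₂ : ℝ) (m m' : ℤ × ℤ × ℤ) : Prop :=
  IsBestApprox α₁ α₂ m ∧ IsBestApprox α₁ α₂ m' ∧ hgt m < hgt m' ∧
  ∀ n : ℤ × ℤ × ℤ, IsBestApprox α₁ α₂ n → hgt n ≤ hgt m ∨ hgt m' ≤ hgt n

theorem le_abs_sub_mul_add_abs_sub_mul {X t x₁ x₂ y₁ y₂ : ℝ} (ht₀ : 0 ≤ t) (ht₁ : t ≤ 1)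
    (hx₁ : |x₁| ≤ X) (hx₂ : |x₂| ≤ X) (hy : X ≤ |y₁| ∨ X ≤ |y₂|)
    (hyx : X ≤ |y₁ - x₁| ∨ X ≤ |y₂ - x₂|) : X ≤ |y₁ - t * x₁| + |y₂ - t * x₂| := by
  have far : ∀ {x y : ℝ}, |x| ≤ X → X ≤ |y| → (1 - t) * X ≤ |y - t * x| := by
    intro x y hx hy
    have := abs_sub_abs_le_abs_sub y (t * x)
    rw [abs_mul, abs_of_nonneg ht₀] at this
    nlinarith
  have far' : ∀ {x y : ℝ}, |x| ≤ X → X ≤ |y - x| → t * X ≤ |y - t * x| := by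
    intro x y hx hyx
    have := abs_sub_abs_le_abs_sub (y - x) (-((1 - t) * x))
    rw [abs_neg, abs_mul, abs_of_nonneg (sub_nonneg.2 ht₁),
      show y - x - -((1 - t) * x) = y - t * x by ring] at this
    nlinarith
  have both : ∀ {x y : ℝ}, |x| ≤ X → X ≤ |y| → X ≤ |y - x| → X ≤ |y - t * x| := by
    intro x y hx hy hyx
    rw [abs_le] at hx
    rcases le_abs'.1 hy with hy | hy <;> rcases le_abs'.1 hyx with hyx | hyx <;>
      first
      | exact le_abs.2 (Or.inl (by nlinarith))
      | exact le_abs.2 (Or.inr (by nlinarith))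
  have h₁ := abs_nonneg (y₁ - t * x₁)
  have h₂ := abs_nonneg (y₂ - t * x₂)
  rcases hy with hy | hy <;> rcases hyx with hyx | hyx
  · linarith [both hx₁ hy hyx]
  · linarith [far hx₁ hy, far' hx₂ hyx]
  · linarith [far hx₂ hy, far' hx₁ hyx]
  · linarith [both hx₂ hy hyx]

/-- The determinant of the matrix with rows `p, q, w`. -/
def det3 {R : Type*} [CommRing R] (p q w : R × R × R) : R :=
  p.1 * (q.2.1 * w.2.2 - q.2.2 * w.2.1) - q.1 * (p.2.1 * w.2.2 - p.2.2 * w.2.1)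
    + w.1 * (p.2.1 * q.2.2 - p.2.2 * q.2.1)

theorem det3_sub {R : Type*} [CommRing R] (p q w y : R × R × R) :
    det3 p q (w - y) = det3 p q w - det3 p q y := by
  simp only [det3, Prod.fst_sub, Prod.snd_sub]
  ring

theorem exists_eq_smul_add_smul_of_det3_eq_zero {K : Type*} [Field K] {p q y : K × K × K}
    (hpq : LinearIndependent K ![p, q]) (hdet : det3 p q y = 0) :
    ∃ a b : K, y = a • p + b • q := by
  have hM : (!![p.1, p.2.1, p.2.2; q.1, q.2.1, q.2.2; y.1, y.2.1, y.2.2]).det = 0 := by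
    rw [Matrix.det_fin_three, ← hdet, det3]
    simp only [Matrix.of_apply, Matrix.cons_val', Matrix.cons_val_zero, Matrix.cons_val_one,
      Matrix.cons_val_fin_one, Matrix.cons_val]
    ring
  obtain ⟨v, hv, hvM⟩ := Matrix.exists_vecMul_eq_zero_iff.2 hM
  have hrel : v 0 • p + v 1 • q + v 2 • y = 0 := by
    refine Prod.ext ?_ (Prod.ext ?_ ?_)
    · simpa [Matrix.vecMul, dotProduct, Fin.sum_univ_three] using congrFun hvM 0
    · simpa [Matrix.vecMul, dotProduct, Fin.sum_univ_three] using congrFun hvM 1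
    · simpa [Matrix.vecMul, dotProduct, Fin.sum_univ_three] using congrFun hvM 2
  have hv2 : v 2 ≠ 0 := by
    intro hv2
    rw [hv2, zero_smul, add_zero] at hrel
    obtain ⟨hv0, hv1⟩ := LinearIndependent.pair_iff.1 hpq _ _ hrel
    exact hv (funext fun i => by fin_cases i <;> assumption)
  refine ⟨-(v 2)⁻¹ * v 0, -(v 2)⁻¹ * v 1, ?_⟩
  rw [← inv_smul_smul₀ hv2 y, eq_neg_of_add_eq_zero_right hrel]
  module

theorem exists_abs_le_add_mul_add_mul_eq_intCast (c : ℝ) {s t : ℝ} (hst : 0 < |s| + |t|) :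
    ∃ x y : ℝ, |x| ≤ 1 / (2 * (|s| + |t|)) ∧ |y| ≤ 1 / (2 * (|s| + |t|)) ∧
      ∃ k : ℤ, c + s * x + t * y = k := by
  set ρ : ℝ := (round c - c) / (|s| + |t|) with hρ
  have hρ_le : |ρ| ≤ 1 / (2 * (|s| + |t|)) := by
    rw [hρ, abs_div, abs_of_pos hst, abs_sub_comm, ← div_div]
    gcongr
    exact abs_sub_round c
  have hsign (u : ℝ) : |ρ * SignType.sign u| ≤ 1 / (2 * (|s| + |t|)) := by
    have : |((SignType.sign u : SignType) : ℝ)| ≤ 1 := by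
      cases SignType.sign u <;> simp
    rw [abs_mul]
    exact (mul_le_of_le_one_right (abs_nonneg ρ) this).trans hρ_le
  refine ⟨ρ * SignType.sign s, ρ * SignType.sign t, hsign s, hsign t, round c, ?_⟩
  calc c + s * (ρ * SignType.sign s) + t * (ρ * SignType.sign t)
      = c + ρ * (s * SignType.sign s + t * SignType.sign t) := by ring
    _ = round c := by rw [self_mul_sign, self_mul_sign, hρ, div_mul_cancel₀ _ hst.ne']; ring

theorem hgt_nonneg (n : ℤ × ℤ × ℤ) : 0 ≤ hgt n :=
  (abs_nonneg _).trans (le_max_left _ _)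

/-- The linear embedding of `ℤ³` into `ℝ³` by the coordinates `(ζ(n), n₁, n₂)`. The target is
`ℝ × ℝ × ℝ`, so that the norm of the second component is the height. -/
noncomputable def latticePoint (α₁ α₂ : ℝ) : ℤ × ℤ × ℤ →ₗ[ℤ] ℝ × ℝ × ℝ :=
  AddMonoidHom.toIntLinearMap <|
    AddMonoidHom.mk' (fun n => (zform α₁ α₂ n, (n.2.1 : ℝ), (n.2.2 : ℝ))) fun m n => by
      simp only [zform, Prod.fst_add, Prod.snd_add, Int.cast_add, Prod.mk_add_mk]
      congr 1
      ring

theorem latticePoint_apply (α₁ α₂ : ℝ) (n : ℤ × ℤ × ℤ) :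
    latticePoint α₁ α₂ n = (zform α₁ α₂ n, (n.2.1 : ℝ), (n.2.2 : ℝ)) := rfl

theorem norm_snd_latticePoint (α₁ α₂ : ℝ) (n : ℤ × ℤ × ℤ) :
    ‖(latticePoint α₁ α₂ n).2‖ = hgt n := by
  simp [latticePoint_apply, hgt, Prod.norm_def]

theorem norm_snd_smul_add_smul_le {α₁ α₂ : ℝ} {a b : ℝ} (p q : ℤ × ℤ × ℤ)
    (ha : |a| ≤ 1 / 2) (hb : |b| ≤ 1 / 2) :
    ‖(a • latticePoint α₁ α₂ p + b • latticePoint α₁ α₂ q).2‖ ≤ (hgt p + hgt q) / 2 := by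
  have hp : (0 : ℝ) ≤ hgt p := by exact_mod_cast hgt_nonneg p
  have hq : (0 : ℝ) ≤ hgt q := by exact_mod_cast hgt_nonneg q
  calc _ ≤ |a| * hgt p + |b| * hgt q := by
        refine norm_add_le_of_le (le_of_eq ?_) (le_of_eq ?_) <;>
          rw [Prod.smul_snd, norm_smul, norm_snd_latticePoint, Real.norm_eq_abs]
    _ ≤ 1 / 2 * hgt p + 1 / 2 * hgt q := by gcongr
    _ = _ := by ring

theorem det3_latticePoint (α₁ α₂ : ℝ) (p q w : ℤ × ℤ × ℤ) :
    det3 (latticePoint α₁ α₂ p) (latticePoint α₁ α₂ q) (latticePoint α₁ α₂ w) =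
      (det3 p q w : ℤ) := by
  simp only [det3, latticePoint_apply, zform]
  push_cast
  ring

/-- A pair `p, q` of integer vectors such that the box `|ζ| < |ζ(p)|`, `max(|x₁|, |x₂|) < M(q)`,
on whose boundary they lie, contains no integer point other than the origin. Consecutive best
approximations form such a pair. -/
structure MinimalPair (α₁ α₂ : ℝ) (p q : ℤ × ℤ × ℤ) : Prop where
  zform_ne_zero : zform α₁ α₂ p ≠ 0
  abs_zform_le : |zform α₁ α₂ q| ≤ |zform α₁ α₂ p|
  hgt_lt : hgt p < hgt q
  eq_zero_of_lt : ∀ n, hgt n < hgt q → |zform α₁ α₂ n| < |zform α₁ α₂ p| → n = 0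

namespace MinimalPair

variable {α₁ α₂ : ℝ} {p q : ℤ × ℤ × ℤ}

theorem neg_left (hpq : MinimalPair α₁ α₂ p q) : MinimalPair α₁ α₂ (-p) q := by
  have hz : zform α₁ α₂ (-p) = -zform α₁ α₂ p := congrArg Prod.fst (map_neg (latticePoint α₁ α₂) p)
  have hh : hgt (-p) = hgt p := by simp [hgt]
  obtain ⟨h1, h2, h3, h4⟩ := hpq
  constructor <;> simpa only [hz, hh, abs_neg, neg_ne_zero]

theorem hgt_pos (hpq : MinimalPair α₁ α₂ p q) : 0 < hgt q :=
  (hgt_nonneg p).trans_lt hpq.hgt_lt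

theorem linearIndependent (hpq : MinimalPair α₁ α₂ p q) :
    LinearIndependent ℝ ![latticePoint α₁ α₂ p, latticePoint α₁ α₂ q] := by
  refine LinearIndependent.pair_iff.2 fun a b hab => ?_
  have hz : 0 < |zform α₁ α₂ p| := abs_pos.2 hpq.zform_ne_zero
  have hlt : (hgt p : ℝ) < hgt q := by exact_mod_cast hpq.hgt_lt
  rw [add_eq_zero_iff_eq_neg] at hab
  have hfst : |a| * |zform α₁ α₂ p| = |b| * |zform α₁ α₂ q| := by
    rw [← abs_mul, ← abs_mul, ← abs_neg (b * _)]
    exact congrArg (|·.1|) hab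
  have hsnd : |a| * hgt p = |b| * hgt q := by
    rw [← norm_snd_latticePoint α₁ α₂ p, ← norm_snd_latticePoint α₁ α₂ q, ← Real.norm_eq_abs,
      ← Real.norm_eq_abs, ← norm_smul, ← norm_smul, ← norm_neg (b • _)]
    exact congrArg (‖·.2‖) hab
  have hle : |a| ≤ |b| := by
    refine le_of_mul_le_mul_right (hfst.trans_le ?_) hz
    exact mul_le_mul_of_nonneg_left hpq.abs_zform_le (abs_nonneg b)
  have hb : b = 0 := by
    by_contra hb
    have hb' : 0 < |b| := abs_pos.2 hb
    have : |a| * hgt p ≤ |b| * hgt p := by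
      gcongr
      exact_mod_cast hgt_nonneg p
    nlinarith
  exact ⟨abs_nonpos_iff.1 (by simpa [hb] using hle), hb⟩

theorem eq_zero_of_latticePoint_eq_of_abs_lt (hpq : MinimalPair α₁ α₂ p q) {r : ℤ × ℤ × ℤ}
    {a b : ℝ} (hr : latticePoint α₁ α₂ r = a • latticePoint α₁ α₂ p + b • latticePoint α₁ α₂ q)
    (ha : |a| ≤ 1 / 2) (hb : |b| ≤ 1 / 2)
    (hlt : |a * zform α₁ α₂ p + b * zform α₁ α₂ q| < |zform α₁ α₂ p|) : a = 0 ∧ b = 0 := by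
  have hhgt : (hgt r : ℝ) < hgt q := by
    have hlt : (hgt p : ℝ) < hgt q := by exact_mod_cast hpq.hgt_lt
    have := norm_snd_smul_add_smul_le (α₁ := α₁) (α₂ := α₂) p q ha hb
    rw [← hr, norm_snd_latticePoint] at this
    linarith
  have hr0 : r = 0 := by
    refine hpq.eq_zero_of_lt r (by exact_mod_cast hhgt) ?_
    rwa [show zform α₁ α₂ r = _ from congrArg Prod.fst hr]
  exact LinearIndependent.pair_iff.1 hpq.linearIndependent a b (by rw [← hr, hr0, map_zero])

theorem eq_zero_of_latticePoint_eq (hpq : MinimalPair α₁ α₂ p q) {r : ℤ × ℤ × ℤ} {a b : ℝ}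
    (hr : latticePoint α₁ α₂ r = a • latticePoint α₁ α₂ p + b • latticePoint α₁ α₂ q)
    (ha : |a| ≤ 1 / 2) (hb : |b| ≤ 1 / 2) : a = 0 ∧ b = 0 := by
  have hz : 0 < |zform α₁ α₂ p| := abs_pos.2 hpq.zform_ne_zero
  have hx : |a * zform α₁ α₂ p| ≤ 1 / 2 * |zform α₁ α₂ p| := by rw [abs_mul]; gcongr
  have hy : |b * zform α₁ α₂ q| ≤ |b| * |zform α₁ α₂ p| := by
    rw [abs_mul]
    exact mul_le_mul_of_nonneg_left hpq.abs_zform_le (abs_nonneg b)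
  by_cases hlt : |a * zform α₁ α₂ p + b * zform α₁ α₂ q| < |zform α₁ α₂ p|
  · exact hpq.eq_zero_of_latticePoint_eq_of_abs_lt hr ha hb hlt
  -- Now `|b| = 1/2`, and `r` may be replaced by `a p - b q`, at which `ζ` vanishes.
  have hb_half : |b| = 1 / 2 := by
    refine hb.antisymm (le_of_mul_le_mul_right ?_ hz)
    have := abs_add_le (a * zform α₁ α₂ p) (b * zform α₁ α₂ q)
    linarith
  obtain ⟨e, he⟩ : ∃ e : ℤ, 2 * b = e := by
    rcases abs_cases b with h | h
    exacts [⟨1, by push_cast; linarith⟩, ⟨-1, by push_cast; linarith⟩]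
  have hr' : latticePoint α₁ α₂ (r - e • q) =
      a • latticePoint α₁ α₂ p + (-b) • latticePoint α₁ α₂ q := by
    rw [map_sub, map_smul, hr, ← Int.cast_smul_eq_zsmul ℝ, ← he]
    module
  rw [hb_half] at hy
  rw [abs_le] at hx hy
  have h0 := hpq.eq_zero_of_latticePoint_eq_of_abs_lt hr' ha (by rwa [abs_neg]) (by
    rw [neg_mul, abs_lt]
    rcases le_abs.1 (not_lt.1 hlt) with h | h <;> constructor <;> linarith)
  exact ⟨h0.1, neg_eq_zero.1 h0.2⟩

theorem dvd_of_smul_eq (hpq : MinimalPair α₁ α₂ p q) {l a b : ℤ} {r : ℤ × ℤ × ℤ}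
    (hr : l • r = a • p + b • q) : l ∣ a ∧ l ∣ b := by
  have hlr : (l : ℝ) • latticePoint α₁ α₂ r =
      (a : ℝ) • latticePoint α₁ α₂ p + (b : ℝ) • latticePoint α₁ α₂ q := by
    simpa only [map_add, map_smul, Int.cast_smul_eq_zsmul] using congrArg (latticePoint α₁ α₂) hr
  rcases eq_or_ne l 0 with rfl | hl
  · rw [Int.cast_zero, zero_smul] at hlr
    have := LinearIndependent.pair_iff.1 hpq.linearIndependent _ _ hlr.symm
    simpa using this
  have hl' : (l : ℝ) ≠ 0 := by exact_mod_cast hl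
  have dvd_of_round : ∀ {c : ℤ}, (c : ℝ) / l - round (c / l : ℝ) = 0 → l ∣ c := fun {c} hc =>
    ⟨round (c / l : ℝ), by
      rw [sub_eq_zero, div_eq_iff hl', mul_comm] at hc
      exact_mod_cast hc⟩
  have hred : latticePoint α₁ α₂ (r - round (a / l : ℝ) • p - round (b / l : ℝ) • q) =
      (a / l - round (a / l : ℝ) : ℝ) • latticePoint α₁ α₂ p +
        (b / l - round (b / l : ℝ) : ℝ) • latticePoint α₁ α₂ q := by
    rw [map_sub, map_sub, map_smul, map_smul, ← inv_smul_smul₀ hl' (latticePoint α₁ α₂ r), hlr]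
    module
  obtain ⟨ha, hb⟩ := hpq.eq_zero_of_latticePoint_eq hred (abs_sub_round _) (abs_sub_round _)
  exact ⟨dvd_of_round ha, dvd_of_round hb⟩

theorem isUnit_of_dvd_minors (hpq : MinimalPair α₁ α₂ p q) {l : ℤ}
    (h₀ : l ∣ p.2.1 * q.2.2 - p.2.2 * q.2.1) (h₁ : l ∣ p.1 * q.2.2 - p.2.2 * q.1)
    (h₂ : l ∣ p.1 * q.2.1 - p.2.1 * q.1) : IsUnit l := by
  obtain ⟨x, hx⟩ := h₀
  obtain ⟨y, hy⟩ := h₁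
  obtain ⟨z, hz⟩ := h₂
  have dvd_coeffs : ∀ {a b r₀ r₁ r₂ : ℤ}, l * r₀ = a * p.1 + b * q.1 →
      l * r₁ = a * p.2.1 + b * q.2.1 → l * r₂ = a * p.2.2 + b * q.2.2 → l ∣ a ∧ l ∣ b :=
    fun {_ _ r₀ r₁ r₂} e₀ e₁ e₂ =>
      hpq.dvd_of_smul_eq (r := (r₀, r₁, r₂)) (Prod.ext e₀ (Prod.ext e₁ e₂))
  -- Each minor is a coordinate of one of the combinations `qᵢ p - pᵢ q`.
  have d₀ : l ∣ p.1 := dvd_neg.1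
    (dvd_coeffs (a := q.1) (r₀ := 0) (r₁ := -z) (r₂ := -y) (by ring) (by lia) (by lia)).2
  have d₁ : l ∣ p.2.1 := dvd_neg.1
    (dvd_coeffs (a := q.2.1) (r₀ := z) (r₁ := 0) (r₂ := -x) (by lia) (by ring) (by lia)).2
  have d₂ : l ∣ p.2.2 := dvd_neg.1
    (dvd_coeffs (a := q.2.2) (r₀ := y) (r₁ := x) (r₂ := 0) (by lia) (by lia) (by ring)).2
  obtain ⟨s₀, hs₀⟩ := d₀
  obtain ⟨s₁, hs₁⟩ := d₁
  obtain ⟨s₂, hs₂⟩ := d₂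
  exact isUnit_of_dvd_one
    (dvd_coeffs (a := 1) (b := 0) (r₀ := s₀) (r₁ := s₁) (r₂ := s₂) (by lia) (by lia) (by lia)).1

theorem exists_det3_eq (hpq : MinimalPair α₁ α₂ p q) (k : ℤ) : ∃ w, det3 p q w = k := by
  set m₀ := p.2.1 * q.2.2 - p.2.2 * q.2.1 with hm₀
  set m₁ := p.1 * q.2.2 - p.2.2 * q.1 with hm₁
  set m₂ := p.1 * q.2.1 - p.2.1 * q.1 with hm₂
  let I : Ideal ℤ := Ideal.span {m₀, m₁, m₂}
  have hdvd : ∀ m ∈ ({m₀, m₁, m₂} : Set ℤ), Submodule.IsPrincipal.generator I ∣ m := fun m hm =>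
    (Submodule.IsPrincipal.mem_iff_generator_dvd I).1 (Ideal.subset_span hm)
  have hI : I = ⊤ := I.eq_top_of_isUnit_mem (Submodule.IsPrincipal.generator_mem I)
    (hpq.isUnit_of_dvd_minors (hdvd m₀ (by simp)) (hdvd m₁ (by simp)) (hdvd m₂ (by simp)))
  have hk : k ∈ I := hI ▸ Submodule.mem_top
  obtain ⟨x, y, z, hxyz⟩ := Submodule.mem_span_triple.1 hk
  refine ⟨(x, -y, z), ?_⟩
  rw [← hxyz, det3, hm₀, hm₁, hm₂]
  simp only [smul_eq_mul]
  ring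

theorem le_hgt_sub (hpq : MinimalPair α₁ α₂ p q) (hpos : 0 < zform α₁ α₂ q / zform α₁ α₂ p) :
    hgt q ≤ hgt (q - p) := by
  have hz : zform α₁ α₂ (q - p) = zform α₁ α₂ q - zform α₁ α₂ p :=
    congrArg Prod.fst (map_sub (latticePoint α₁ α₂) q p)
  have hlt : |zform α₁ α₂ (q - p)| < |zform α₁ α₂ p| := by
    have := hpq.abs_zform_le
    rw [hz]
    rcases div_pos_iff.1 hpos with ⟨hq, hp⟩ | ⟨hq, hp⟩
    · rw [abs_of_pos hq, abs_of_pos hp] at this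
      rw [abs_of_pos hp, abs_lt]
      constructor <;> linarith
    · rw [abs_of_neg hq, abs_of_neg hp] at this
      rw [abs_of_neg hp, abs_lt]
      constructor <;> linarith
  by_contra! hlt_hgt
  have := hpq.hgt_lt
  rw [sub_eq_zero.1 (hpq.eq_zero_of_lt _ hlt_hgt hlt)] at this
  exact this.false

theorem hgt_le_abs_sub_mul_add_abs_sub_mul (hpq : MinimalPair α₁ α₂ p q) {t : ℝ}
    (ht : zform α₁ α₂ q = t * zform α₁ α₂ p) (ht₀ : 0 ≤ t) :
    hgt q ≤ |q.2.1 - t * p.2.1| + |q.2.2 - t * p.2.2| := by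
  have hz := hpq.zform_ne_zero
  have ht' : zform α₁ α₂ q / zform α₁ α₂ p = t := by rw [ht]; field_simp
  have hq : (hgt q : ℝ) ≤ |(q.2.1 : ℝ)| ∨ (hgt q : ℝ) ≤ |(q.2.2 : ℝ)| := by
    exact_mod_cast le_max_iff.1 (le_refl (hgt q))
  rcases ht₀.eq_or_lt with rfl | ht₀
  · simp only [zero_mul, sub_zero]
    rcases hq with hq | hq <;> linarith [abs_nonneg (q.2.1 : ℝ), abs_nonneg (q.2.2 : ℝ)]
  have ht₁ : t ≤ 1 := by
    rw [← abs_of_pos ht₀, ← ht', abs_div]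
    exact div_le_one_of_le₀ hpq.abs_zform_le (abs_nonneg _)
  have hp₁ : |p.2.1| ≤ hgt q := (le_max_left _ _).trans hpq.hgt_lt.le
  have hp₂ : |p.2.2| ≤ hgt q := (le_max_right _ _).trans hpq.hgt_lt.le
  have hsub := le_max_iff.1 (hpq.le_hgt_sub (ht' ▸ ht₀))
  exact le_abs_sub_mul_add_abs_sub_mul ht₀.le ht₁ (by exact_mod_cast hp₁) (by exact_mod_cast hp₂)
    hq (by exact_mod_cast hsub)

theorem hgt_mul_abs_zform_le (hpq : MinimalPair α₁ α₂ p q) :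
    hgt q * |zform α₁ α₂ p| ≤
      |zform α₁ α₂ p * q.2.1 - zform α₁ α₂ q * p.2.1| +
        |zform α₁ α₂ p * q.2.2 - zform α₁ α₂ q * p.2.2| := by
  wlog hsign : 0 ≤ zform α₁ α₂ q / zform α₁ α₂ p generalizing p
  · have hz : zform α₁ α₂ (-p) = -zform α₁ α₂ p :=
      congrArg Prod.fst (map_neg (latticePoint α₁ α₂) p)
    have := this hpq.neg_left (by rw [hz, div_neg]; linarith)
    have hneg (x y : ℝ) : -zform α₁ α₂ p * x - zform α₁ α₂ q * -y =
        -(zform α₁ α₂ p * x - zform α₁ α₂ q * y) := by ring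
    simpa only [Prod.snd_neg, Prod.fst_neg, Int.cast_neg, hz, hneg, abs_neg] using this
  have hz := hpq.zform_ne_zero
  have hl1 := hpq.hgt_le_abs_sub_mul_add_abs_sub_mul (div_mul_cancel₀ _ hz).symm hsign
  calc _ = |zform α₁ α₂ p| * hgt q := mul_comm _ _
    _ ≤ _ := mul_le_mul_of_nonneg_left hl1 (abs_nonneg _)
    _ = _ := by
      rw [mul_add, ← abs_mul, ← abs_mul]
      congr 2 <;> field_simp

theorem exists_det3_eq_intCast (hpq : MinimalPair α₁ α₂ p q) (y : ℝ × ℝ × ℝ) :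
    ∃ e : ℝ × ℝ, ‖e‖ ≤ 1 / (2 * (hgt q * |zform α₁ α₂ p|)) ∧ ∃ k : ℤ,
      det3 (latticePoint α₁ α₂ p) (latticePoint α₁ α₂ q) (y.1, y.2 + e) = k := by
  set s := -(zform α₁ α₂ p * q.2.2 - zform α₁ α₂ q * p.2.2) with hs
  set t := zform α₁ α₂ p * q.2.1 - zform α₁ α₂ q * p.2.1 with ht
  have hpos : 0 < hgt q * |zform α₁ α₂ p| :=
    mul_pos (by exact_mod_cast hpq.hgt_pos) (abs_pos.2 hpq.zform_ne_zero)
  have hle : hgt q * |zform α₁ α₂ p| ≤ |s| + |t| := by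
    rw [hs, abs_neg, add_comm]
    exact hpq.hgt_mul_abs_zform_le
  obtain ⟨e₁, e₂, he₁, he₂, k, hk⟩ := exists_abs_le_add_mul_add_mul_eq_intCast
    (det3 (latticePoint α₁ α₂ p) (latticePoint α₁ α₂ q) y) (hpos.trans_le hle)
  have hbound : 1 / (2 * (|s| + |t|)) ≤ 1 / (2 * (hgt q * |zform α₁ α₂ p|)) := by gcongr
  refine ⟨(e₁, e₂), norm_prod_le_iff.2 ⟨he₁.trans hbound, he₂.trans hbound⟩, k, ?_⟩
  rw [← hk, hs, ht]
  simp only [det3, latticePoint_apply, Prod.fst_add, Prod.snd_add]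
  ring

theorem exists_latticePoint_sub_eq (hpq : MinimalPair α₁ α₂ p q) {y : ℝ × ℝ × ℝ} {k : ℤ}
    (hy : det3 (latticePoint α₁ α₂ p) (latticePoint α₁ α₂ q) y = k) :
    ∃ w, ∃ a b : ℝ, |a| ≤ 1 / 2 ∧ |b| ≤ 1 / 2 ∧
      latticePoint α₁ α₂ w - y = a • latticePoint α₁ α₂ p + b • latticePoint α₁ α₂ q := by
  obtain ⟨w, hw⟩ := hpq.exists_det3_eq k
  have hdet :
      det3 (latticePoint α₁ α₂ p) (latticePoint α₁ α₂ q) (latticePoint α₁ α₂ w - y) = 0 := by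
    rw [det3_sub, det3_latticePoint, hw, hy, sub_self]
  obtain ⟨a, b, hab⟩ :=
    exists_eq_smul_add_smul_of_det3_eq_zero hpq.linearIndependent hdet
  refine ⟨w - round a • p - round b • q, a - round a, b - round b, abs_sub_round a,
    abs_sub_round b, ?_⟩
  rw [map_sub, map_sub, map_smul, map_smul, sub_eq_iff_eq_add.1 hab]
  module

theorem exists_abs_sub_le_norm_sub_le (hpq : MinimalPair α₁ α₂ p q) (y : ℝ × ℝ × ℝ) :
    ∃ w : ℤ × ℤ × ℤ, |zform α₁ α₂ w - y.1| ≤ |zform α₁ α₂ p| ∧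
      ‖((w.2.1 : ℝ), (w.2.2 : ℝ)) - y.2‖ ≤ hgt q + 1 / (2 * (hgt q * |zform α₁ α₂ p|)) := by
  obtain ⟨e, he, k, hk⟩ := hpq.exists_det3_eq_intCast y
  obtain ⟨w, a, b, ha, hb, hw⟩ := hpq.exists_latticePoint_sub_eq hk
  refine ⟨w, ?_, ?_⟩
  · have hfst : zform α₁ α₂ w - y.1 = a * zform α₁ α₂ p + b * zform α₁ α₂ q :=
      congrArg Prod.fst hw
    calc |zform α₁ α₂ w - y.1| ≤ |a| * |zform α₁ α₂ p| + |b| * |zform α₁ α₂ q| := by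
          rw [hfst, ← abs_mul, ← abs_mul]
          exact abs_add_le _ _
      _ ≤ 1 / 2 * |zform α₁ α₂ p| + 1 / 2 * |zform α₁ α₂ p| := by
          have := hpq.abs_zform_le
          gcongr
      _ = |zform α₁ α₂ p| := by ring
  · have hsnd := norm_snd_smul_add_smul_le (α₁ := α₁) (α₂ := α₂) p q ha hb
    rw [← hw, Prod.snd_sub, ← sub_sub] at hsnd
    have hlt : (hgt p : ℝ) < hgt q := by exact_mod_cast hpq.hgt_lt
    refine (norm_le_norm_sub_add _ e).trans (add_le_add (hsnd.trans ?_) he)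
    linarith

theorem exists_pos_abs_zform_le (hpq : MinimalPair α₁ α₂ p q) :
    ∃ w : ℤ × ℤ × ℤ, 0 < w.2.1 ∧ 0 < w.2.2 ∧ (hgt q : ℝ) ≤ (max w.2.1 w.2.2 : ℤ) ∧
      ((max w.2.1 w.2.2 : ℤ) : ℝ) ≤ 3 * hgt q + 1 / (hgt q * |zform α₁ α₂ p|) ∧
      |zform α₁ α₂ w| ≤ |zform α₁ α₂ p| := by
  set δ := 1 / (2 * (hgt q * |zform α₁ α₂ p|)) with hδ
  have h2δ : 1 / (hgt q * |zform α₁ α₂ p|) = 2 * δ := by rw [hδ]; field_simp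
  have hX : (0 : ℝ) < hgt q := by exact_mod_cast hpq.hgt_pos
  obtain ⟨w, hform, hnorm⟩ := hpq.exists_abs_sub_le_norm_sub_le
    (0, 2 * hgt q + δ, 2 * hgt q + δ)
  rw [sub_zero] at hform
  obtain ⟨h₁, h₂⟩ := norm_prod_le_iff.1 hnorm
  simp only [Prod.fst_sub, Prod.snd_sub, Real.norm_eq_abs, abs_le] at h₁ h₂
  have hw₁ : (hgt q : ℝ) ≤ w.2.1 := by linarith
  have hw₂ : (hgt q : ℝ) ≤ w.2.2 := by linarith
  refine ⟨w, by exact_mod_cast hX.trans_le hw₁, by exact_mod_cast hX.trans_le hw₂, ?_, ?_, hform⟩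
  · exact_mod_cast le_max_of_le_left (b := (w.2.1 : ℝ)) (c := (w.2.2 : ℝ)) hw₁
  · rw [h2δ, Int.cast_max]
    exact max_le (by linarith) (by linarith)

end MinimalPair

/-! ### Best approximations -/

theorem nint_le_abs_zform (α₁ α₂ : ℝ) (n : ℤ × ℤ × ℤ) :
    nint (α₁ * n.2.1 + α₂ * n.2.2) ≤ |zform α₁ α₂ n| := by
  have hn : zform α₁ α₂ n = α₁ * n.2.1 + α₂ * n.2.2 - (-n.1 : ℤ) := by
    rw [zform]
    push_cast
    ring
  rw [hn]
  exact round_le _ _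

theorem finite_setOf_hgt_le_abs_zform_le (α₁ α₂ : ℝ) (H : ℤ) (c : ℝ) :
    {n | hgt n ≤ H ∧ |zform α₁ α₂ n| ≤ c}.Finite := by
  set R : ℤ := ⌈c + H * |α₁| + H * |α₂|⌉
  refine (Set.finite_Icc (-R, -H, -H) (R, H, H)).subset fun n ⟨hH, hc⟩ => ?_
  obtain ⟨h₁, h₂⟩ := max_le_iff.1 hH
  have h₁' : |(n.2.1 : ℝ)| ≤ H := by exact_mod_cast h₁
  have h₂' : |(n.2.2 : ℝ)| ≤ H := by exact_mod_cast h₂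
  have h₀ : |n.1| ≤ R := by
    have : |(n.1 : ℝ)| ≤ R := calc
      _ = |zform α₁ α₂ n - n.2.1 * α₁ - n.2.2 * α₂| := by
        rw [zform]
        ring_nf
      _ ≤ |zform α₁ α₂ n| + |(n.2.1 : ℝ)| * |α₁| + |(n.2.2 : ℝ)| * |α₂| := by
        rw [← abs_mul, ← abs_mul]
        exact (abs_sub _ _).trans (add_le_add_left (abs_sub _ _) _)
      _ ≤ c + H * |α₁| + H * |α₂| := by gcongr
      _ ≤ R := Int.le_ceil _
    exact_mod_cast this
  rw [abs_le] at h₀ h₁ h₂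
  exact ⟨⟨h₀.1, h₁.1, h₂.1⟩, ⟨h₀.2, h₁.2, h₂.2⟩⟩

theorem exists_isBestApprox_le (α₁ α₂ : ℝ) {n : ℤ × ℤ × ℤ} (hn : 0 < hgt n) :
    ∃ b, IsBestApprox α₁ α₂ b ∧ hgt b ≤ hgt n ∧ |zform α₁ α₂ b| ≤ |zform α₁ α₂ n| := by
  obtain ⟨b, ⟨hb₀, hb, hbn⟩, hmin⟩ := Set.exists_min_image
    {r | 0 < hgt r ∧ hgt r ≤ hgt n ∧ |zform α₁ α₂ r| ≤ |zform α₁ α₂ n|}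
    (fun r => |zform α₁ α₂ r|)
    ((finite_setOf_hgt_le_abs_zform_le α₁ α₂ _ _).subset fun _ hr => hr.2)
    ⟨n, hn, le_rfl, le_rfl⟩
  refine ⟨b, ⟨hb₀, fun r hr₀ hr => ?_⟩, hb, hbn⟩
  rcases le_total |zform α₁ α₂ r| |zform α₁ α₂ n| with h | h
  · exact hmin r ⟨hr₀, hr.trans hb, h⟩
  · exact hbn.trans h

theorem IsBestApprox.abs_zform_le_half {α₁ α₂ : ℝ} {m : ℤ × ℤ × ℤ} (hm : IsBestApprox α₁ α₂ m) :
    |zform α₁ α₂ m| ≤ 1 / 2 := by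
  have hhgt : hgt (-round α₁, 1, 0) = 1 := by simp [hgt]
  have hle := hm.2 (-round α₁, 1, 0) (hhgt ▸ one_pos) (hhgt.trans_le hm.1)
  have hn : zform α₁ α₂ (-round α₁, 1, 0) = α₁ - round α₁ := by
    rw [zform]
    push_cast
    ring
  rw [hn] at hle
  exact hle.trans (abs_sub_round α₁)

theorem exists_abs_zform_mul_lt_one (α₁ α₂ : ℝ) {X : ℤ} (hX : 2 ≤ X) :
    ∃ n, 0 < hgt n ∧ hgt n < X ∧ |zform α₁ α₂ n| * (X ^ 2 - 1 : ℤ) < 1 := by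
  set K : ℤ := X ^ 2 - 1 with hK
  have hK₀ : (0 : ℝ) < K := by exact_mod_cast (by nlinarith : 0 < K)
  let φ : ℤ × ℤ → ℝ := fun x => x.1 * α₁ + x.2 * α₂
  have hcard : (Finset.Ico 0 K).card < (Finset.Ico 0 X ×ˢ Finset.Ico 0 X).card := by
    simp only [Finset.card_product, Int.card_Ico, sub_zero]
    zify
    rw [Int.toNat_of_nonneg (by nlinarith), Int.toNat_of_nonneg (by lia), hK]
    linarith
  have hmaps : ∀ x ∈ Finset.Ico 0 X ×ˢ Finset.Ico 0 X,
      ⌊Int.fract (φ x) * K⌋ ∈ Finset.Ico 0 K := fun x _ =>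
    Finset.mem_Ico.2 ⟨Int.floor_nonneg.2 (mul_nonneg (Int.fract_nonneg _) hK₀.le),
      Int.floor_lt.2 (mul_lt_of_lt_one_left hK₀ (Int.fract_lt_one _))⟩
  obtain ⟨x, hx, y, hy, hne, heq⟩ :=
    Finset.exists_ne_map_eq_of_card_lt_of_maps_to hcard hmaps
  simp only [Finset.mem_product, Finset.mem_Ico] at hx hy
  refine ⟨(⌊φ y⌋ - ⌊φ x⌋, x.1 - y.1, x.2 - y.2), ?_, ?_, ?_⟩
  · rw [hgt, lt_max_iff, abs_pos, abs_pos, sub_ne_zero, sub_ne_zero]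
    contrapose! hne
    exact Prod.ext hne.1 hne.2
  · refine max_lt ?_ ?_ <;> rw [abs_lt] <;> constructor <;> simp only <;> lia
  · have hfract : zform α₁ α₂ (⌊φ y⌋ - ⌊φ x⌋, x.1 - y.1, x.2 - y.2) =
        Int.fract (φ x) - Int.fract (φ y) := by
      simp only [zform, Int.fract, φ]
      push_cast
      ring
    rw [hfract, ← abs_of_pos hK₀, ← abs_mul, sub_mul]
    exact Int.abs_sub_lt_one_of_floor_eq_floor heq

namespace ConsecutiveBest

variable {α₁ α₂ : ℝ} {m m' : ℤ × ℤ × ℤ}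

theorem abs_zform_le (hc : ConsecutiveBest α₁ α₂ m m') {n : ℤ × ℤ × ℤ} (hn₀ : 0 < hgt n)
    (hn : hgt n < hgt m') : |zform α₁ α₂ m| ≤ |zform α₁ α₂ n| := by
  obtain ⟨hm, -, -, hgap⟩ := hc
  obtain ⟨b, hb, hbn, hble⟩ := exists_isBestApprox_le α₁ α₂ hn₀
  have hbm : hgt b ≤ hgt m := (hgap b hb).resolve_right (hbn.trans_lt hn).not_ge
  exact (hm.2 b hb.1 hbm).trans hble

theorem minimalPair (hc : ConsecutiveBest α₁ α₂ m m') (h₀ : zform α₁ α₂ m ≠ 0) :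
    MinimalPair α₁ α₂ m m' where
  zform_ne_zero := h₀
  abs_zform_le := hc.2.1.2 m hc.1.1 hc.2.2.1.le
  hgt_lt := hc.2.2.1
  eq_zero_of_lt n hn hlt := by
    have hn₀ : hgt n ≤ 0 := by
      by_contra! h
      exact (hc.abs_zform_le h hn).not_gt hlt
    obtain ⟨h₁, h₂⟩ := max_le_iff.1 hn₀
    rw [abs_nonpos_iff] at h₁ h₂
    have hn₁ : |(n.1 : ℝ)| < 1 := by
      have := hlt.trans_le hc.1.abs_zform_le_half
      simp only [zform, h₁, h₂, Int.cast_zero, zero_mul, add_zero] at this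
      linarith
    exact Prod.ext (Int.abs_lt_one_iff.1 (by exact_mod_cast hn₁)) (Prod.ext h₁ h₂)

theorem abs_zform_mul_sq_le (hc : ConsecutiveBest α₁ α₂ m m') :
    |zform α₁ α₂ m| * (hgt m' : ℝ) ^ 2 ≤ 2 := by
  have hX : 2 ≤ hgt m' := by linarith [hc.1.1, hc.2.2.1]
  obtain ⟨n, hn₀, hn, hlt⟩ := exists_abs_zform_mul_lt_one α₁ α₂ hX
  have hX' : (2 : ℝ) ≤ hgt m' := by exact_mod_cast hX
  have hle := hc.abs_zform_le hn₀ hn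
  have hhalf := hc.1.abs_zform_le_half
  have hmul : |zform α₁ α₂ m| * ((hgt m' : ℝ) ^ 2 - 1) < 1 := by
    refine (mul_le_mul_of_nonneg_right hle (by nlinarith)).trans_lt ?_
    exact_mod_cast hlt
  linarith

end ConsecutiveBest

/-! ### Golden ratio estimates -/

theorem one_lt_tau : 1 < tau :=
  Real.one_lt_goldenRatio

theorem tau_lt_two : tau < 2 :=
  Real.goldenRatio_lt_two

theorem tau_sq : tau ^ 2 = tau + 1 :=
  Real.goldenRatio_sq

theorem one_div_tau : 1 / tau = tau - 1 := by
  rw [div_eq_iff (by linarith [one_lt_tau])]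
  linarith [tau_sq]

theorem one_sub_tau_div_tau : (1 - tau) / tau = tau - 2 := by
  rw [div_eq_iff (by linarith [one_lt_tau])]
  linarith [tau_sq]

theorem tau_div_tau_sub_one : tau / (tau - 1) = tau + 1 := by
  rw [div_eq_iff (by linarith [one_lt_tau])]
  linarith [tau_sq]

theorem mul_le_rpow_mul_inv_rpow_div {M X C s : ℝ} (hM : 0 < M) (hMX : M ≤ X) (hC : 0 < C)
    (hs : 1 ≤ s) : C * X ≤ X ^ s * (M ^ (s - 1) / C)⁻¹ := by
  have hX : 0 < X := hM.trans_le hMX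
  rw [← div_eq_mul_inv, le_div_iff₀ (by positivity)]
  calc C * X * (M ^ (s - 1) / C) = X * M ^ (s - 1) := by field_simp
    _ ≤ X * X ^ (s - 1) := by gcongr
    _ = X ^ s := by rw [Real.rpow_sub_one hX.ne', mul_div_cancel₀ _ hX.ne']

theorem one_div_mul_le_rpow_mul_inv {A X z s : ℝ} (hA : 0 < A) (hX : 0 < X)
    (hz : A * X ^ (-(s + 1)) ≤ z) : 1 / (X * z) ≤ X ^ s * A⁻¹ := by
  have hz₀ : 0 < z := lt_of_lt_of_le (by positivity) hz
  rw [div_le_iff₀ (by positivity)]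
  calc 1 = X ^ s * A⁻¹ * (X * (A * X ^ (-(s + 1)))) := by
        rw [Real.rpow_neg hX.le, Real.rpow_add_one hX.ne']
        field_simp
    _ ≤ X ^ s * A⁻¹ * (X * z) := by gcongr

theorem mul_rpow_le_of_le_six_mul {M X z h s : ℝ} (hM : 0 < M) (hMX : M ≤ X) (hz : 0 ≤ z)
    (hs₁ : 1 ≤ s) (hs₂ : s ≤ 2) (hzX : z * X ^ 2 ≤ 2) (hh₀ : 0 ≤ h) (hh : h ≤ 6 * X) :
    z * h ^ s ≤ 24 ^ s * M ^ (s - 2) := by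
  have hX : 0 < X := hM.trans_le hMX
  have htwo : (2 : ℝ) ≤ 4 ^ s :=
    calc (2 : ℝ) ≤ 4 ^ (1 : ℝ) := by norm_num
      _ ≤ 4 ^ s := by gcongr; norm_num
  calc z * h ^ s ≤ z * (6 * X) ^ s := by gcongr
    _ = z * X ^ 2 * (6 ^ s * X ^ (s - 2)) := by
      rw [Real.mul_rpow (by norm_num) hX.le, Real.rpow_sub hX, Real.rpow_two]
      field_simp
    _ ≤ 4 ^ s * (6 ^ s * M ^ (s - 2)) := by
      have := Real.rpow_le_rpow_of_nonpos hM hMX (sub_nonpos.2 hs₂)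
      gcongr
      exact hzX.trans htwo
    _ = 24 ^ s * M ^ (s - 2) := by
      rw [← mul_assoc, ← Real.mul_rpow (by norm_num) (by norm_num)]
      norm_num

theorem mul_rpow_tau_le_of_le_two_mul_inv {M X C z h : ℝ} (hM : 0 < M) (hX : 0 < X) (hC : 0 < C)
    (hz : M ^ (tau - 1) / C * X ^ (-(tau + 1)) ≤ z) (hh₀ : 0 ≤ h) (hh : h ≤ 2 * (X * z)⁻¹) :
    z * h ^ tau ≤ 2 ^ tau * C ^ (tau - 1) * M ^ (tau - 2) := by
  have hz₀ : 0 < z := lt_of_lt_of_le (by positivity) hz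
  have hτ := one_lt_tau
  have hτ₂ := tau_sq
  have hle : M ^ (2 - tau) / C ^ (tau - 1) ≤ X ^ tau * z ^ (tau - 1) :=
    calc M ^ (2 - tau) / C ^ (tau - 1)
        = X ^ tau * (M ^ (tau - 1) / C * X ^ (-(tau + 1))) ^ (tau - 1) := by
          rw [Real.mul_rpow (by positivity) (by positivity), Real.div_rpow (by positivity) hC.le,
            ← Real.rpow_mul hM.le, ← Real.rpow_mul hX.le,
            show (tau - 1) * (tau - 1) = 2 - tau by linarith,
            show -(tau + 1) * (tau - 1) = -tau by linarith, Real.rpow_neg hX.le]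
          field_simp
      _ ≤ X ^ tau * z ^ (tau - 1) := by gcongr
  calc z * h ^ tau ≤ z * (2 * (X * z)⁻¹) ^ tau := by gcongr
    _ = 2 ^ tau * (X ^ tau * z ^ (tau - 1))⁻¹ := by
      rw [Real.mul_rpow (by norm_num) (by positivity), Real.inv_rpow (by positivity),
        Real.mul_rpow hX.le hz₀.le, Real.rpow_sub_one hz₀.ne']
      field_simp
    _ ≤ 2 ^ tau * (M ^ (2 - tau) / C ^ (tau - 1))⁻¹ := by gcongr
    _ = 2 ^ tau * C ^ (tau - 1) * M ^ (tau - 2) := by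
      rw [← neg_sub 2 tau, Real.rpow_neg hM.le]
      field_simp

theorem two_rpow_tau_mul_le : (2 : ℝ) ^ tau * 120 ^ (tau - 1) ≤ 24 ^ tau := by
  have hτ := one_lt_tau
  have hτ₂ := tau_lt_two
  calc (2 : ℝ) ^ tau * 120 ^ (tau - 1) ≤ 2 ^ tau * (12 ^ (2 : ℝ)) ^ (tau - 1) := by
        gcongr
        norm_num
    _ = 2 ^ tau * 12 ^ (2 * (tau - 1)) := by rw [Real.rpow_mul (by norm_num)]
    _ ≤ 2 ^ tau * 12 ^ tau := by gcongr <;> linarith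
    _ = 24 ^ tau := by
      rw [← Real.mul_rpow (by norm_num) (by norm_num)]
      norm_num

theorem three_mul_add_one_div_le {M X z : ℝ} (hM : 0 < M) (hMX : M ≤ X)
    (hz : M ^ (1 / tau) / 120 * X ^ (-(tau / (tau - 1))) ≤ z) :
    3 * X + 1 / (X * z) ≤ 2 * X ^ tau * (M ^ (1 / tau) / 120)⁻¹ := by
  have hX : 0 < X := hM.trans_le hMX
  rw [tau_div_tau_sub_one] at hz
  have h₁ := one_div_mul_le_rpow_mul_inv (by positivity) hX hz
  have h₂ := mul_le_rpow_mul_inv_rpow_div hM hMX (C := 120) (by norm_num) one_lt_tau.le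
  rw [← one_div_tau] at h₂
  linarith

theorem le_mul_rpow_neg_tau {M X z h : ℝ} (hM : 0 < M) (hMX : M ≤ X) (hzX : z * X ^ 2 ≤ 2)
    (hz : M ^ (1 / tau) / 120 * X ^ (-(tau / (tau - 1))) ≤ z) (hh₀ : 0 < h)
    (hh : h ≤ 3 * X + 1 / (X * z)) :
    z ≤ 24 ^ tau * M ^ ((1 - tau) / tau) * h ^ (-tau) := by
  have hX : 0 < X := hM.trans_le hMX
  have hz₀ : 0 < z := lt_of_lt_of_le (by positivity) hz
  rw [one_div_tau, tau_div_tau_sub_one] at hz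
  rw [one_sub_tau_div_tau, Real.rpow_neg hh₀.le, ← div_eq_mul_inv, le_div_iff₀ (by positivity)]
  rw [one_div] at hh
  rcases le_total (X * z)⁻¹ (3 * X) with hle | hle
  · exact mul_rpow_le_of_le_six_mul hM hMX hz₀.le one_lt_tau.le tau_lt_two.le hzX hh₀.le
      (by linarith)
  · refine (mul_rpow_tau_le_of_le_two_mul_inv hM hX (by norm_num) hz hh₀.le
      (by linarith)).trans ?_
    gcongr
    exact two_rpow_tau_mul_le

theorem corollary2_general (α₁ α₂ : ℝ)
    (m m' : ℤ × ℤ × ℤ) (hc : ConsecutiveBest α₁ α₂ m m')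
    (hz : (hgt m : ℝ) ^ (1 / tau) / 120 * (hgt m' : ℝ) ^ (-(tau / (tau - 1)))
            ≤ |zform α₁ α₂ m|) :
    ∃ x : ℤ × ℤ, 0 < x.1 ∧ 0 < x.2 ∧
      (hgt m' : ℝ) ≤ ((max x.1 x.2 : ℤ) : ℝ) ∧
      ((max x.1 x.2 : ℤ) : ℝ) ≤ 2 * (hgt m' : ℝ) ^ tau * ((hgt m : ℝ) ^ (1 / tau) / 120)⁻¹ ∧
      nint (α₁ * x.1 + α₂ * x.2) ≤
        24 ^ tau * (hgt m : ℝ) ^ ((1 - tau) / tau) * ((max x.1 x.2 : ℤ) : ℝ) ^ (-tau) := by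
  have hM : (0 : ℝ) < hgt m := by exact_mod_cast hc.1.1
  have hMX : (hgt m : ℝ) ≤ hgt m' := by exact_mod_cast hc.2.2.1.le
  have hX : (0 : ℝ) < hgt m' := hM.trans_le hMX
  have hm : zform α₁ α₂ m ≠ 0 := abs_pos.1 (lt_of_lt_of_le (by positivity) hz)
  obtain ⟨w, hw₁, hw₂, hXw, hwX, hform⟩ := (hc.minimalPair hm).exists_pos_abs_zform_le
  refine ⟨w.2, hw₁, hw₂, hXw, hwX.trans (three_mul_add_one_div_le hM hMX hz), ?_⟩
  calc nint (α₁ * w.2.1 + α₂ * w.2.2) ≤ |zform α₁ α₂ w| := nint_le_abs_zform α₁ α₂ w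
    _ ≤ |zform α₁ α₂ m| := hform
    _ ≤ _ := le_mul_rpow_neg_tau hM hMX hc.abs_zform_mul_sq_le hz (hX.trans_le hXw) hwX

/-- Corollary 2: with A_ν = M_ν^{1/τ}/120, if ζ_ν ≥ A_ν·M_{ν+1}^{−τ/(τ−1)} then there is an
integer point with positive coordinates, M_{ν+1} ≤ max{x₁⁰,x₂⁰} ≤ 2M_{ν+1}^τ·A_ν⁻¹, and
‖α₁x₁⁰+α₂x₂⁰‖ ≤ 24^τ·M_ν^{(1−τ)/τ}·(max{x₁⁰,x₂⁰})^{−τ}. -/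
theorem corollary2 (α₁ α₂ : ℝ) (h : ZLinIndep α₁ α₂)
    (m m' : ℤ × ℤ × ℤ) (hc : ConsecutiveBest α₁ α₂ m m')
    (hz : (hgt m : ℝ) ^ (1 / tau) / 120 * (hgt m' : ℝ) ^ (-(tau / (tau - 1)))
            ≤ |zform α₁ α₂ m|) :
    ∃ x : ℤ × ℤ, 0 < x.1 ∧ 0 < x.2 ∧
      (hgt m' : ℝ) ≤ ((max x.1 x.2 : ℤ) : ℝ) ∧
      ((max x.1 x.2 : ℤ) : ℝ) ≤ 2 * (hgt m' : ℝ) ^ tau * ((hgt m : ℝ) ^ (1 / tau) / 120)⁻¹ ∧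
      nint (α₁ * x.1 + α₂ * x.2) ≤
        24 ^ tau * (hgt m : ℝ) ^ ((1 - tau) / tau) * ((max x.1 x.2 : ℤ) : ℝ) ^ (-tau) :=
  corollary2_general α₁ α₂ m m' hc hz
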